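/- arXiv:1707.07764 — 3 statements merged into one kernel-verified Lean document; each statement's English description precedes it below -/
import Mathlib

section
/- The exponential exp(t·ι_ξ) := Σ_{k=0}^{n} (t^k/k!) · ι_ξ^k (a finite sum, since ι_ξ^{n+1} = 0) is, for each t ∈ ℝ, an algebra automorphism of Λ: exp(t·ι_ξ)(x * y) = exp(t·ι_ξ)(x) * exp(t·ι_ξ)(y) for all x, y ∈ Λ, and exp(t·ι_ξ) ∘ exp(−t·ι_ξ) = id. (This makes rigorous the superfield transformation e^{ι_ξ}𝔹 used in the paper.) -/
noncomputable section

open ExteriorAlgebra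

variable (E G : Type) [AddCommGroup E] [Module ℝ E] [AddCommGroup G] [Module ℝ G]

/-- The ghost generator `θ = ι(0, g)`. -/
def ghost (g : G) : ExteriorAlgebra ℝ (E × G) := ExteriorAlgebra.ι ℝ ((0 : E), g)

/-- The extension `f̃(e, g) = f(e)` of a covector on `E` to `E × G`. -/
def fTilde (f : Module.Dual ℝ E) : Module.Dual ℝ (E × G) := f.comp (LinearMap.fst ℝ E G)

/-- The odd contraction `ι_ξ x = Σ_i θ_i * ∂_i x`. -/
def iotaXi {k : ℕ} (g : Fin k → G) (f : Fin k → Module.Dual ℝ E) :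
    ExteriorAlgebra ℝ (E × G) →ₗ[ℝ] ExteriorAlgebra ℝ (E × G) :=
  ∑ i, (LinearMap.mulLeft ℝ (ghost E G (g i))).comp
    (CliffordAlgebra.contractLeft (fTilde E G (f i)))

/-- The algebra map `Λ(E) → Λ(E × G)` induced by `e ↦ (e, 0)`. -/
def inclE : ExteriorAlgebra ℝ E →ₐ[ℝ] ExteriorAlgebra ℝ (E × G) :=
  ExteriorAlgebra.lift ℝ ⟨(ExteriorAlgebra.ι ℝ).comp (LinearMap.inl ℝ E G),
    fun _ => ExteriorAlgebra.ι_sq_zero _⟩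

/-- `x ∈ Λ(E × G)` has `E`-degree `p` if it is the image of an element of the `p`-th
exterior power of `E` under the algebra map induced by `e ↦ (e, 0)`. -/
def HasEDegree (p : ℕ) (x : ExteriorAlgebra ℝ (E × G)) : Prop :=
  x ∈ Submodule.map (inclE E G).toLinearMap (⋀[ℝ]^p E)

/-- The exponential `exp(t·ι_ξ) = Σ_{k=0}^{n} (t^k/k!) · ι_ξ^k`, a finite sum since
`ι_ξ^{n+1} = 0` (where `n = dim E`). -/
def expIota {k : ℕ} (g : Fin k → G) (f : Fin k → Module.Dual ℝ E) (t : ℝ) :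
    ExteriorAlgebra ℝ (E × G) →ₗ[ℝ] ExteriorAlgebra ℝ (E × G) :=
  ∑ j ∈ Finset.range (Module.finrank ℝ E + 1),
    (t ^ j / (j.factorial : ℝ)) • iotaXi E G g f ^ j

theorem iotaXi_apply {k : ℕ} (g : Fin k → G) (f : Fin k → Module.Dual ℝ E)
    (x : ExteriorAlgebra ℝ (E × G)) :
    iotaXi E G g f x =
      ∑ i, ghost E G (g i) * CliffordAlgebra.contractLeft (fTilde E G (f i)) x := by
  simp [iotaXi, LinearMap.sum_apply]

theorem iotaXi_ι_mul {k : ℕ} (g : Fin k → G) (f : Fin k → Module.Dual ℝ E)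
    (v : E × G) (x : ExteriorAlgebra ℝ (E × G)) :
    iotaXi E G g f (ExteriorAlgebra.ι ℝ v * x) =
      iotaXi E G g f (ExteriorAlgebra.ι ℝ v) * x
        + ExteriorAlgebra.ι ℝ v * iotaXi E G g f x := by
  simp only [iotaXi_apply, Finset.sum_mul, Finset.mul_sum]
  rw [← Finset.sum_add_distrib]
  refine Finset.sum_congr rfl fun i _ => ?_
  have h1 := CliffordAlgebra.contractLeft_ι_mul (Q := (0 : QuadraticForm ℝ (E × G)))
    (d := fTilde E G (f i)) v x
  have h2 := CliffordAlgebra.contractLeft_ι (Q := (0 : QuadraticForm ℝ (E × G)))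
    (d := fTilde E G (f i)) v
  change CliffordAlgebra.contractLeft (fTilde E G (f i)) (ExteriorAlgebra.ι ℝ v * x)
    = _ • x - ExteriorAlgebra.ι ℝ v * _ at h1
  change CliffordAlgebra.contractLeft (fTilde E G (f i)) (ExteriorAlgebra.ι ℝ v)
    = algebraMap ℝ (ExteriorAlgebra ℝ (E × G)) _ at h2
  have h3 : ghost E G (g i) * ExteriorAlgebra.ι ℝ v
      = - (ExteriorAlgebra.ι ℝ v * ghost E G (g i)) :=
    eq_neg_of_add_eq_zero_left (ExteriorAlgebra.ι_add_mul_swap _ _)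
  rw [h1, h2, mul_sub, ← mul_assoc, h3, mul_smul_comm, neg_mul, sub_neg_eq_add,
    ← Algebra.commutes, mul_assoc, mul_assoc, ← Algebra.smul_def]

theorem iotaXi_algebraMap {k : ℕ} (g : Fin k → G) (f : Fin k → Module.Dual ℝ E) (r : ℝ) :
    iotaXi E G g f (algebraMap ℝ _ r) = 0 := by
  rw [iotaXi_apply]
  refine Finset.sum_eq_zero fun i _ => ?_
  have h := CliffordAlgebra.contractLeft_algebraMap (0 : QuadraticForm ℝ (E × G))
    (d := fTilde E G (f i)) r
  change CliffordAlgebra.contractLeft (fTilde E G (f i))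
    (algebraMap ℝ (ExteriorAlgebra ℝ (E × G)) r) = 0 at h
  rw [h, mul_zero]

theorem iotaXi_mul {k : ℕ} (g : Fin k → G) (f : Fin k → Module.Dual ℝ E)
    (x y : ExteriorAlgebra ℝ (E × G)) :
    iotaXi E G g f (x * y) = x * iotaXi E G g f y + iotaXi E G g f x * y := by
  induction x using CliffordAlgebra.left_induction with
  | algebraMap r =>
    change iotaXi E G g f (algebraMap ℝ (ExteriorAlgebra ℝ (E × G)) r * y) =
      algebraMap ℝ (ExteriorAlgebra ℝ (E × G)) r * iotaXi E G g f y +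
        iotaXi E G g f (algebraMap ℝ (ExteriorAlgebra ℝ (E × G)) r) * y
    rw [iotaXi_algebraMap, zero_mul, add_zero, ← Algebra.smul_def, ← Algebra.smul_def, map_smul]
  | add a b ha hb =>
    rw [add_mul, map_add, map_add, ha, hb]
    noncomm_ring
  | ι_mul a v ha =>
    change iotaXi E G g f (ExteriorAlgebra.ι ℝ v * a * y) =
      ExteriorAlgebra.ι ℝ v * a * iotaXi E G g f y +
        iotaXi E G g f (ExteriorAlgebra.ι ℝ v * a) * y
    rw [mul_assoc, iotaXi_ι_mul, iotaXi_ι_mul, ha]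
    noncomm_ring

theorem iotaXi_ghost {k : ℕ} (g : Fin k → G) (f : Fin k → Module.Dual ℝ E) (u : G) :
    iotaXi E G g f (ghost E G u) = 0 := by
  rw [iotaXi_apply]
  refine Finset.sum_eq_zero fun i _ => ?_
  have h := CliffordAlgebra.contractLeft_ι (0 : QuadraticForm ℝ (E × G))
    (d := fTilde E G (f i)) ((0 : E), u)
  change CliffordAlgebra.contractLeft (fTilde E G (f i)) (ghost E G u)
    = algebraMap ℝ (ExteriorAlgebra ℝ (E × G)) _ at h
  rw [h]
  simp [fTilde]

/-- The action of `Λ(E*)` on `Λ(E × G)` by iterated contraction. -/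
def contrAlg : ExteriorAlgebra ℝ (Module.Dual ℝ E) →ₐ[ℝ]
    Module.End ℝ (ExteriorAlgebra ℝ (E × G)) :=
  ExteriorAlgebra.lift ℝ
    ⟨{ toFun := fun d => CliffordAlgebra.contractLeft (fTilde E G d)
       map_add' := fun a b => by
        rw [← map_add]; rfl
       map_smul' := fun a b => by
        rw [RingHom.id_apply, ← map_smul]; rfl },
      fun d => LinearMap.ext fun x => CliffordAlgebra.contractLeft_contractLeft (x := x) ..⟩

theorem contrAlg_ι (d : Module.Dual ℝ E) :
    contrAlg E G (ExteriorAlgebra.ι ℝ d) = CliffordAlgebra.contractLeft (fTilde E G d) := by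
  simp [contrAlg]

theorem iotaXi_pow_mem {k : ℕ} (g : Fin k → G) (f : Fin k → Module.Dual ℝ E)
    (x : ExteriorAlgebra ℝ (E × G)) (m : ℕ) :
    (iotaXi E G g f ^ m) x ∈ Submodule.span ℝ
      {z | ∃ a w, iotaXi E G g f a = 0 ∧ w ∈ (⋀[ℝ]^m (Module.Dual ℝ E)) ∧
        z = a * contrAlg E G w x} := by
  induction m with
  | zero =>
    refine Submodule.subset_span ⟨1, 1, ?_, ?_, ?_⟩
    · simpa using iotaXi_algebraMap E G g f 1
    · simp [exteriorPower]
    · simp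
  | succ m ih =>
    rw [pow_succ', Module.End.mul_apply]
    generalize (iotaXi E G g f ^ m) x = y at ih
    induction ih using Submodule.span_induction with
    | zero => simp
    | add a b _ _ ha hb => rw [map_add]; exact add_mem ha hb
    | smul r a _ ha => rw [map_smul]; exact Submodule.smul_mem _ _ ha
    | mem z hz =>
      obtain ⟨a, w, ha, hw, rfl⟩ := hz
      rw [iotaXi_mul, ha, zero_mul, add_zero, iotaXi_apply, Finset.mul_sum]
      refine Submodule.sum_mem _ fun i _ => Submodule.subset_span
        ⟨a * ghost E G (g i), ExteriorAlgebra.ι ℝ (f i) * w, ?_, ?_, ?_⟩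
      · rw [iotaXi_mul, ha, iotaXi_ghost]; simp
      · rw [exteriorPower, pow_succ']
        exact Submodule.mul_mem_mul (LinearMap.mem_range_self _ _) hw
      · rw [map_mul, Module.End.mul_apply, contrAlg_ι, mul_assoc]

theorem iotaXi_pow_eq_zero [FiniteDimensional ℝ E]
    {k : ℕ} (g : Fin k → G) (f : Fin k → Module.Dual ℝ E) :
    iotaXi E G g f ^ (Module.finrank ℝ E + 1) = 0 := by
  refine LinearMap.ext fun x => ?_
  have hbot : (⋀[ℝ]^(Module.finrank ℝ E + 1) (Module.Dual ℝ E)) = ⊥ := by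
    rw [← Submodule.finrank_eq_zero (R := ℝ), exteriorPower.finrank_eq, Subspace.dual_finrank_eq]
    simp
  have h := iotaXi_pow_mem E G g f x (Module.finrank ℝ E + 1)
  rw [hbot] at h
  rw [LinearMap.zero_apply, ← Submodule.mem_bot ℝ]
  refine (Submodule.span_le.2 ?_) h
  rintro z ⟨a, w, -, hw, rfl⟩
  rw [Submodule.mem_bot] at hw
  simp [hw]

theorem expIota_eq_exp [FiniteDimensional ℝ E] [Module ℚ (ExteriorAlgebra ℝ (E × G))]
    {k : ℕ} (g : Fin k → G) (f : Fin k → Module.Dual ℝ E) (t : ℝ) :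
    expIota E G g f t = IsNilpotent.exp (A := Module.End ℝ (ExteriorAlgebra ℝ (E × G)))
      (t • iotaXi E G g f) := by
  have hnil : (t • iotaXi E G g f) ^ (Module.finrank ℝ E + 1) = 0 := by
    rw [smul_pow, iotaXi_pow_eq_zero, smul_zero]
  rw [IsNilpotent.exp_eq_sum hnil, expIota]
  refine Finset.sum_congr rfl fun j _ => ?_
  refine LinearMap.ext fun x => ?_
  rw [smul_pow, LinearMap.smul_apply, LinearMap.smul_apply, LinearMap.smul_apply,
    ← Rat.cast_smul_eq_qsmul ℝ, smul_smul]
  congr 1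
  push_cast
  rw [div_eq_inv_mul]

/-- For each `t ∈ ℝ`, `exp(t·ι_ξ)` is an algebra automorphism of `Λ`:
it is multiplicative, and `exp(t·ι_ξ) ∘ exp(−t·ι_ξ) = id`. -/
theorem expIota_isAlgAut [FiniteDimensional ℝ E] [FiniteDimensional ℝ G]
    {k : ℕ} (g : Fin k → G) (f : Fin k → Module.Dual ℝ E) (t : ℝ) :
    (∀ x y : ExteriorAlgebra ℝ (E × G),
      expIota E G g f t (x * y) = expIota E G g f t x * expIota E G g f t y) ∧
    ∀ x : ExteriorAlgebra ℝ (E × G),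
      expIota E G g f t (expIota E G g f (-t) x) = x := by
  let _ : Module ℚ (ExteriorAlgebra ℝ (E × G)) := Module.compHom _ (algebraMap ℚ ℝ)
  have hnil : ∀ s : ℝ, IsNilpotent
      (s • iotaXi E G g f : Module.End ℝ (ExteriorAlgebra ℝ (E × G))) := fun s =>
    ⟨Module.finrank ℝ E + 1, by rw [smul_pow, iotaXi_pow_eq_zero, smul_zero]⟩
  constructor
  · intro x y
    rw [expIota_eq_exp]
    refine Module.End.exp_mul_of_derivation ℝ _ _ (fun x y => ?_) (hnil t) x y
    simp only [LinearMap.smul_apply]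
    rw [iotaXi_mul, smul_add, mul_smul_comm, smul_mul_assoc]
  · intro x
    have hneg : (-t) • iotaXi E G g f = -(t • iotaXi E G g f) :=
      LinearMap.ext fun z => by
        rw [LinearMap.neg_apply, LinearMap.smul_apply, LinearMap.smul_apply]
        exact neg_smul t _
    rw [expIota_eq_exp, expIota_eq_exp, hneg, ← Module.End.mul_apply,
      IsNilpotent.exp_mul_exp_neg_self (hnil t), Module.End.one_apply]
end
end

section
/- Let α be a homogeneous element of the exterior algebra Λ(E) of top degree n and β a homogeneous element of degree 2. Then for all f, g ∈ Dual ℝ E one has (ι_f ι_g α) * β = α * (ι_f ι_g β), where ι_f denotes left contraction by f. (This is the exchange identity for double contractions against a top-degree form, which justifies the paper's manipulation ι_ξ²α∧β = α∧ι_ξ²β.) -/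
noncomputable section

open ExteriorAlgebra

lemma aux_involute_contract (E : Type) [AddCommGroup E] [Module ℝ E]
    (f : Module.Dual ℝ E) (x : ExteriorAlgebra ℝ E) :
    CliffordAlgebra.involute (CliffordAlgebra.contractLeft f x) =
      - CliffordAlgebra.contractLeft f (CliffordAlgebra.involute x) := by
  induction x using CliffordAlgebra.left_induction with
  | algebraMap r => simp
  | add x y hx hy => simp only [map_add, hx, hy]; abel
  | ι_mul x m hx =>
    rw [CliffordAlgebra.contractLeft_ι_mul, map_sub, map_mul, map_mul, hx, map_smul,
      CliffordAlgebra.involute_ι, neg_mul, neg_mul, map_neg, CliffordAlgebra.contractLeft_ι_mul]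
    simp only [neg_mul, mul_neg]
    abel

lemma aux_contract_mul_ι (E : Type) [AddCommGroup E] [Module ℝ E]
    (f : Module.Dual ℝ E) (v : E) (x : ExteriorAlgebra ℝ E) :
    CliffordAlgebra.contractLeft f (x * CliffordAlgebra.ι 0 v) =
      CliffordAlgebra.contractLeft f x * CliffordAlgebra.ι 0 v
        + f v • CliffordAlgebra.involute x := by
  induction x using CliffordAlgebra.left_induction with
  | algebraMap r =>
    rw [CliffordAlgebra.contractLeft_algebraMap_mul, CliffordAlgebra.contractLeft_ι,
      CliffordAlgebra.contractLeft_algebraMap, zero_mul, zero_add, AlgHom.commutes,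
      Algebra.smul_def, Algebra.commutes]
  | add x y hx hy => simp only [map_add, add_mul, hx, hy, smul_add]; abel
  | ι_mul x m hx =>
    rw [mul_assoc, CliffordAlgebra.contractLeft_ι_mul, hx, CliffordAlgebra.contractLeft_ι_mul,
      map_mul, CliffordAlgebra.involute_ι]
    simp only [sub_mul, mul_add, smul_mul_assoc, mul_smul_comm, neg_mul, smul_neg, mul_assoc]
    abel

lemma aux_top_mul_ι (E : Type) [AddCommGroup E] [Module ℝ E] [FiniteDimensional ℝ E]
    (α : ExteriorAlgebra ℝ E) (hα : α ∈ ⋀[ℝ]^(Module.finrank ℝ E) E) (v : E) :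
    α * CliffordAlgebra.ι 0 v = 0 := by
  have h : α * CliffordAlgebra.ι 0 v ∈ ⋀[ℝ]^(Module.finrank ℝ E + 1) E := by
    rw [exteriorPower, pow_succ]
    exact Submodule.mul_mem_mul hα ⟨v, rfl⟩
  have h0 : Module.finrank ℝ (⋀[ℝ]^(Module.finrank ℝ E + 1) E) = 0 := by
    rw [exteriorPower.finrank_eq]; simp
  have h1 := Submodule.finrank_eq_zero.mp h0
  rw [h1] at h
  simpa using h

/-- If `α` is homogeneous of top degree `n = dim E` and `β` is homogeneous of
degree `2`, then for all covectors `f, g`, `(ι_f ι_g α) * β = α * (ι_f ι_g β)`. -/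
theorem contractLeft_double_exchange
    (E : Type) [AddCommGroup E] [Module ℝ E] [FiniteDimensional ℝ E]
    (f g : Module.Dual ℝ E) (α β : ExteriorAlgebra ℝ E)
    (hα : α ∈ ⋀[ℝ]^(Module.finrank ℝ E) E) (hβ : β ∈ ⋀[ℝ]^2 E) :
    CliffordAlgebra.contractLeft f (CliffordAlgebra.contractLeft g α) * β =
      α * CliffordAlgebra.contractLeft f (CliffordAlgebra.contractLeft g β) := by
  have h0 := aux_top_mul_ι E α hα
  have h0' : ∀ v, CliffordAlgebra.involute α * CliffordAlgebra.ι 0 v = 0 := by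
    intro v
    have := congrArg CliffordAlgebra.involute (h0 v)
    simpa using this
  have h1 : ∀ (k : Module.Dual ℝ E) v, CliffordAlgebra.contractLeft k α * CliffordAlgebra.ι 0 v
      = - (k v • CliffordAlgebra.involute α) := by
    intro k v
    have := aux_contract_mul_ι E k v α
    rw [h0, map_zero] at this
    exact eq_neg_of_add_eq_zero_left this.symm
  have h1' : ∀ (k : Module.Dual ℝ E) v,
      CliffordAlgebra.contractLeft k (CliffordAlgebra.involute α) * CliffordAlgebra.ι 0 v
      = - (k v • α) := by
    intro k v
    have := aux_contract_mul_ι E k v (CliffordAlgebra.involute α)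
    rw [h0', map_zero, CliffordAlgebra.involute_involute] at this
    exact eq_neg_of_add_eq_zero_left this.symm
  have h2 : ∀ u, CliffordAlgebra.contractLeft f (CliffordAlgebra.contractLeft g α)
      * CliffordAlgebra.ι 0 u = f u • CliffordAlgebra.contractLeft g (CliffordAlgebra.involute α)
        - g u • CliffordAlgebra.contractLeft f (CliffordAlgebra.involute α) := by
    intro u
    have := aux_contract_mul_ι E f u (CliffordAlgebra.contractLeft g α)
    rw [h1, aux_involute_contract, map_neg, map_smul, smul_neg] at this
    rw [← sub_eq_iff_eq_add] at this
    rw [← this]; abel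
  rw [exteriorPower, pow_two] at hβ
  induction hβ using Submodule.mul_induction_on' with
  | add x _ y _ hx hy => simp only [map_add, mul_add, hx, hy]
  | mem_mul_mem x hx y hy =>
    obtain ⟨u, rfl⟩ := hx
    obtain ⟨v, rfl⟩ := hy
    change _ * (CliffordAlgebra.ι 0 u * CliffordAlgebra.ι 0 v) = α * CliffordAlgebra.contractLeft f
      (CliffordAlgebra.contractLeft g (CliffordAlgebra.ι 0 u * CliffordAlgebra.ι 0 v))
    rw [← mul_assoc, h2, sub_mul, smul_mul_assoc, smul_mul_assoc, h1', h1',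
      CliffordAlgebra.contractLeft_ι_mul, CliffordAlgebra.contractLeft_ι, map_sub, map_smul,
      CliffordAlgebra.contractLeft_ι, CliffordAlgebra.contractLeft_mul_algebraMap,
      CliffordAlgebra.contractLeft_ι, mul_sub, ← Algebra.commutes (g v),
      ← Algebra.smul_def, mul_smul_comm, mul_smul_comm, ← Algebra.commutes (f v),
      ← Algebra.commutes (f u), ← Algebra.smul_def, ← Algebra.smul_def]
    module
end
end

section
/- Let e : ℝ³ → ℝ³ be an invertible linear map and let × denote the cross product on ℝ³. Then the linear map Φ_e from the space of linear maps ℝ³ →ₗ ℝ³ to the space of alternating bilinear maps ℝ³ × ℝ³ → ℝ³, defined by Φ_e(ω)(u, v) := ω(u) × e(v) − ω(v) × e(u), is a linear isomorphism. (This is the algebraic fact underlying the paper's claim that the Euler–Lagrange equation d_ω e = 0 of 3-dimensional Palatini–Cartan gravity can be uniquely solved for the connection ω = ω(e) when the triad e is nondegenerate, the bracket on the 3-dimensional Lie algebra being identified with the cross product.) -/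
noncomputable section



/-- For an endomorphism `e` of `ℝ³` and `ω : ℝ³ →ₗ ℝ³`, the alternating bilinear map
`(u, v) ↦ ω(u) × e(v) − ω(v) × e(u)`, where `×` is the cross product. -/
def PhiAlt (e ω : (Fin 3 → ℝ) →ₗ[ℝ] (Fin 3 → ℝ)) :
    (Fin 3 → ℝ) [⋀^Fin 2]→ₗ[ℝ] (Fin 3 → ℝ) where
  toFun v := crossProduct (ω (v 0)) (e (v 1)) - crossProduct (ω (v 1)) (e (v 0))
  map_update_add' m i x y := by
    fin_cases i <;>
      simp [Function.update_apply, map_add, LinearMap.add_apply] <;> abel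
  map_update_smul' m i c x := by
    fin_cases i <;>
      simp [Function.update_apply, _root_.map_smul, LinearMap.smul_apply, smul_sub, mul_sub]
  map_eq_zero_of_eq' v i j hv hij := by
    fin_cases i <;> fin_cases j <;> simp_all [sub_eq_zero]

/-- The linear map `Φ_e` from endomorphisms of `ℝ³` to alternating bilinear maps
`ℝ³ × ℝ³ → ℝ³`, `Φ_e(ω)(u, v) = ω(u) × e(v) − ω(v) × e(u)`. -/
def Phi (e : (Fin 3 → ℝ) →ₗ[ℝ] (Fin 3 → ℝ)) :
    ((Fin 3 → ℝ) →ₗ[ℝ] (Fin 3 → ℝ)) →ₗ[ℝ] ((Fin 3 → ℝ) [⋀^Fin 2]→ₗ[ℝ] (Fin 3 → ℝ)) where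
  toFun ω := PhiAlt e ω
  map_add' ω₁ ω₂ := by
    ext v
    simp [PhiAlt, map_add, LinearMap.add_apply]
    abel
  map_smul' c ω := by
    ext v
    simp [PhiAlt, _root_.map_smul, LinearMap.smul_apply, smul_sub, mul_sub]

/-- If `e : ℝ³ → ℝ³` is an invertible linear map, then the linear map
`Φ_e : End(ℝ³) → AlternatingMaps(ℝ³ × ℝ³ → ℝ³)`, `Φ_e(ω)(u, v) = ω(u) × e(v) − ω(v) × e(u)`,
is a linear isomorphism. -/
theorem phi_bijective (e : (Fin 3 → ℝ) →ₗ[ℝ] (Fin 3 → ℝ)) (he : Function.Bijective e) :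
    (∀ (ω : (Fin 3 → ℝ) →ₗ[ℝ] (Fin 3 → ℝ)) (u v : Fin 3 → ℝ),
        Phi e ω ![u, v] = crossProduct (ω u) (e v) - crossProduct (ω v) (e u)) ∧
      Function.Bijective (Phi e) := by
  have key : ∀ (ω : (Fin 3 → ℝ) →ₗ[ℝ] (Fin 3 → ℝ)) (u v : Fin 3 → ℝ),
      Phi e ω ![u, v] = crossProduct (ω u) (e v) - crossProduct (ω v) (e u) := by
    intro ω u v
    rfl
  refine ⟨key, ?_, ?_⟩
  · rw [injective_iff_map_eq_zero]
    intro ω hω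
    let E := LinearEquiv.ofBijective e he
    let b := (Pi.basisFun ℝ (Fin 3)).map E.symm
    have hb : ∀ i, e (b i) = Pi.single i 1 := by
      intro i
      have : E (b i) = Pi.single i 1 := by simp [b]
      exact this
    have h : ∀ i j k, (crossProduct (ω (b i)) (e (b j)) - crossProduct (ω (b j)) (e (b i))) k = 0 := by
      intro i j k
      rw [← key, hω]; rfl
    simp only [hb] at h
    have h1 := h 1 2
    have h2 := h 2 0
    have h3 := h 0 1
    simp [Fin.forall_fin_succ, crossProduct, Pi.single_apply] at h1 h2 h3
    apply b.ext
    intro i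
    ext k
    fin_cases i <;> fin_cases k <;> simp <;> linarith
  · intro β
    let E := LinearEquiv.ofBijective e he
    let b := (Pi.basisFun ℝ (Fin 3)).map E.symm
    have hb : ∀ i, e (b i) = Pi.single i 1 := by
      intro i
      have : E (b i) = Pi.single i 1 := by simp [b]
      exact this
    let p := β ![b 1, b 2]
    let q := β ![b 2, b 0]
    let r := β ![b 0, b 1]
    let t := (p 0 + q 1 + r 2) / 2
    let ω : (Fin 3 → ℝ) →ₗ[ℝ] (Fin 3 → ℝ) := b.constr ℝ
      ![![t - p 0, - q 0, - r 0], ![- p 1, t - q 1, - r 1], ![- p 2, - q 2, t - r 2]]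
    have w0 : ω (b 0) = ![t - p 0, - q 0, - r 0] := by simp [ω, Module.Basis.constr_basis]
    have w1 : ω (b 1) = ![- p 1, t - q 1, - r 1] := by simp [ω, Module.Basis.constr_basis]
    have w2 : ω (b 2) = ![- p 2, - q 2, t - r 2] := by simp [ω, Module.Basis.constr_basis]
    have sw : ∀ (γ : (Fin 3 → ℝ) [⋀^Fin 2]→ₗ[ℝ] (Fin 3 → ℝ)) (x y : Fin 3 → ℝ),
        γ ![y, x] = - γ ![x, y] := by
      intro γ x y
      rw [← γ.map_swap ![x, y] (i := 0) (j := 1) (by decide)]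
      congr 1
      ext i
      fin_cases i <;> rfl
    have c1 : Phi e ω ![b 1, b 2] = β ![b 1, b 2] := by
      rw [key, hb, hb, w1, w2]
      change _ = p
      ext k
      fin_cases k <;> simp [crossProduct, Pi.single_apply, t] <;> ring
    have c2 : Phi e ω ![b 2, b 0] = β ![b 2, b 0] := by
      rw [key, hb, hb, w2, w0]
      change _ = q
      ext k
      fin_cases k <;> simp [crossProduct, Pi.single_apply, t] <;> ring
    have c3 : Phi e ω ![b 0, b 1] = β ![b 0, b 1] := by
      rw [key, hb, hb, w0, w1]
      change _ = r
      ext k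
      fin_cases k <;> simp [crossProduct, Pi.single_apply, t] <;> ring
    have all : ∀ i j, i ≠ j → Phi e ω ![b i, b j] = β ![b i, b j] := by
      intro i j hij
      fin_cases i <;> fin_cases j
      · exact absurd rfl hij
      · exact c3
      · exact (sw _ _ _).trans ((congrArg _ c2).trans (sw _ _ _).symm)
      · exact (sw _ _ _).trans ((congrArg _ c3).trans (sw _ _ _).symm)
      · exact absurd rfl hij
      · exact c1
      · exact c2
      · exact (sw _ _ _).trans ((congrArg _ c1).trans (sw _ _ _).symm)
      · exact absurd rfl hij
    refine ⟨ω, b.ext_alternating ?_⟩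
    intro v hv
    have e1 : (fun i => b (v i)) = ![b (v 0), b (v 1)] := by
      funext i
      fin_cases i <;> rfl
    rw [e1]
    exact all _ _ (fun h => absurd (hv h) (by decide))
end
end
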